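/- Let (T_n) be the Tribonacci sequence defined by T_1=1, T_2=1, T_3=2 and T_n = T_{n-1} + T_{n-2} + T_{n-3} for n ≥ 4. Then for any prime p not dividing 11·19, p divides T_{p-1} if and only if there exist integers X, Y with p = X^2 + 11Y^2. -/

import Mathlib

/-!
Let `a`, `b`, `c` be the roots of `X ^ 3 - X ^ 2 - X - 1` in an algebraic closure of `ZMod p`. By
Binet's formula `p ∣ T (p - 1)` holds exactly when the Frobenius map fixes each of them. As the
discriminant is `-44`, this forces `-11` to be a square modulo `p`, and Thue's lemma then yields
`p = u ^ 2 + u * v + 3 * v ^ 2`, which has the form `X ^ 2 + 11 * Y ^ 2` exactly when `v` is even.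

For such a prime, Cardano's formula expresses the roots through a cube root of `α / star α`, where
`α` is an Eisenstein integer depending on `u` and `v`, and the Frobenius map fixes them exactly when
the cubic residue symbol of `α` at `p` is trivial. A character `χ` modulo the norm of `α`, built
from Jacobi sums as in the proof of cubic reciprocity, computes that symbol as `χ p`. Since
`27 * p + 16 * v ^ 2` is the norm of `α` and `χ v = 1`, it equals `χ 2`, which is `1` exactly when
`v` is even.
-/

open scoped QuadraticAlgebra

/-- The Eisenstein integers `ℤ[ω]`, with `ω² = -1 - ω`; conjugation is `star`. -/
abbrev EisensteinInt := QuadraticAlgebra ℤ (-1) (-1)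

namespace EisensteinInt

theorem norm_eq (z : EisensteinInt) : z.norm = z.re ^ 2 - z.re * z.im + z.im ^ 2 := by
  rw [QuadraticAlgebra.norm_def]; ring

theorem norm_nonneg (z : EisensteinInt) : 0 ≤ z.norm := by
  rw [norm_eq]
  nlinarith only [sq_nonneg (2 * z.re - z.im), sq_nonneg z.im]

theorem eq_zero_of_norm_eq_zero {z : EisensteinInt} (h : z.norm = 0) : z = 0 := by
  rw [norm_eq] at h
  have him : z.im = 0 := by nlinarith only [h, sq_nonneg (2 * z.re - z.im), sq_nonneg z.im]
  have hre : z.re = 0 := by rw [him] at h; nlinarith only [h]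
  exact QuadraticAlgebra.ext hre him

instance : IsDomain EisensteinInt :=
  have : NoZeroDivisors EisensteinInt := ⟨fun {a b} h ↦ by
    have hab : a.norm * b.norm = 0 := by rw [← map_mul, h, QuadraticAlgebra.norm_zero]
    exact (mul_eq_zero.1 hab).imp eq_zero_of_norm_eq_zero eq_zero_of_norm_eq_zero⟩
  NoZeroDivisors.to_isDomain _

theorem mul_star_eq_norm (z : EisensteinInt) : z * star z = (z.norm : EisensteinInt) :=
  (QuadraticAlgebra.algebraMap_norm_eq_mul_star z).symm

theorem add_star (z : EisensteinInt) : z + star z = ((2 * z.re - z.im : ℤ) : EisensteinInt) := by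
  ext <;> simp; ring

theorem sub_star (z : EisensteinInt) : z - star z = (z.im : EisensteinInt) * (1 + 2 * ω) := by
  ext <;> simp; ring

theorem star_eq_self_iff {z : EisensteinInt} : star z = z ↔ z.im = 0 := by
  simp only [QuadraticAlgebra.ext_iff, QuadraticAlgebra.re_star, QuadraticAlgebra.im_star]; omega

theorem isPrimitiveRoot_omega : IsPrimitiveRoot (ω : EisensteinInt) 3 := by
  refine IsPrimitiveRoot.mk_of_lt _ (by norm_num) (by decide) fun l hl hl3 ↦ ?_
  interval_cases l <;> decide

theorem eq_re_add_im_mul_omega (z : EisensteinInt) :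
    z = (z.re : EisensteinInt) + (z.im : EisensteinInt) * ω := by
  ext <;> simp

theorem star_eq_sq_of_cube_eq_one {z : EisensteinInt} (h : z ^ 3 = 1) : star z = z ^ 2 := by
  have hnorm : z.norm = 1 := by
    refine (pow_eq_one_iff_of_nonneg (norm_nonneg z) three_ne_zero).1 ?_
    rw [← map_pow, h, QuadraticAlgebra.norm_one]
  calc star z = z ^ 3 * star z := by rw [h, one_mul]
    _ = z ^ 2 * (z * star z) := by ring
    _ = z ^ 2 := by rw [mul_star_eq_norm, hnorm, Int.cast_one, mul_one]

section Hom

variable {k : Type*}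

theorem map_eq [Ring k] (φ : EisensteinInt →+* k) (z : EisensteinInt) :
    φ z = z.re + z.im * φ ω := by
  conv_lhs => rw [eq_re_add_im_mul_omega z, map_add, map_mul, map_intCast, map_intCast]

theorem nonempty_ringHom [Field k] [IsAlgClosed k] : Nonempty (EisensteinInt →+* k) := by
  obtain ⟨w, hw⟩ := IsAlgClosed.exists_root (.X ^ 2 + .X + 1 : Polynomial k)
    (by rw [show (Polynomial.X ^ 2 + Polynomial.X + 1 : Polynomial k).degree = 2 by compute_degree!]
        exact two_ne_zero)
  have hw' : w ^ 2 + w + 1 = 0 := by simpa using hw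
  refine ⟨(QuadraticAlgebra.lift ⟨w, ?_⟩ : EisensteinInt →ₐ[ℤ] k).toRingHom⟩
  simp only [zsmul_eq_mul, Int.cast_neg, Int.cast_one]
  linear_combination hw'

theorem map_star [Ring k] (φ : EisensteinInt →+* k) (z : EisensteinInt) :
    φ (star z) = z.re - z.im - z.im * φ ω := by
  simp [map_eq φ (star z), sub_eq_add_neg]

variable [Field k] (φ : EisensteinInt →+* k)

theorem map_omega_cube : φ ω ^ 3 = 1 := by
  rw [← map_pow, isPrimitiveRoot_omega.pow_eq_one, map_one]

theorem map_omega_sq : φ ω ^ 2 + φ ω + 1 = 0 := by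
  rw [← map_pow, ← map_one φ, ← map_add, ← map_add, ← map_zero φ]
  congr 1

theorem eq_one_of_map_eq_one (h3 : (3 : k) ≠ 0) {z : EisensteinInt} (hz : z ^ 3 = 1)
    (h : φ z = 1) : z = 1 := by
  have hfactor : (z - 1) * (z ^ 2 + z + 1) = 0 := by linear_combination hz
  refine sub_eq_zero.1 ((mul_eq_zero.1 hfactor).resolve_right fun h0 ↦ h3 ?_)
  have := congrArg φ h0
  simp only [map_add, map_pow, map_one, map_zero, h] at this
  linear_combination this

variable {p : ℕ} [Fact p.Prime] [CharP k p]

theorem map_pow_char (z : EisensteinInt) : φ z ^ p = z.re + z.im * φ ω ^ p := by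
  rw [map_eq φ z, ← frobenius_def (p := p), map_add, map_mul, map_intCast, map_intCast,
    frobenius_def]

theorem map_pow_char_of_mod_three_eq_one (hp : p % 3 = 1) (z : EisensteinInt) :
    φ z ^ p = φ z := by
  rw [map_pow_char, pow_eq_pow_mod p (map_omega_cube φ), hp, pow_one, ← map_eq]

theorem map_pow_char_of_mod_three_eq_two (hp : p % 3 = 2) (z : EisensteinInt) :
    φ z ^ p = φ (star z) := by
  rw [map_pow_char, pow_eq_pow_mod p (map_omega_cube φ), hp, map_star]
  linear_combination z.im * map_omega_sq φ

end Hom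

theorem natCast_dvd_of_map_eq_zero {k : Type*} [Field k] {q : ℕ} [CharP k q] (h3 : (3 : k) ≠ 0)
    (φ : EisensteinInt →+* k) {z : EisensteinInt} (h : φ z = 0) (h' : φ (star z) = 0) :
    (q : EisensteinInt) ∣ z := by
  have hω := map_omega_sq φ
  rw [map_eq] at h
  rw [map_star] at h'
  have him : (z.im : k) = 0 := by
    refine (mul_eq_zero.1 ?_).resolve_left h3
    linear_combination (1 + 2 * φ ω) * (h' - h) + 4 * z.im * hω
  have hre : (z.re : k) = 0 := by simpa [him] using h
  rw [CharP.intCast_eq_zero_iff k q] at him hre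
  obtain ⟨⟨x, hx⟩, y, hy⟩ := hre, him
  exact ⟨⟨x, y⟩, by ext <;> simp [hx, hy]⟩

end EisensteinInt

section MulChar

variable {R R' : Type*} [CommRing R] [CommRing R'] {χ : MulChar R R'}

theorem mulChar_sq_eq_inv (h : χ ^ 3 = 1) : χ ^ 2 = χ⁻¹ :=
  eq_inv_of_mul_eq_one_left (by rw [← pow_succ, h])

theorem mulChar_cube_apply (h : χ ^ 3 = 1) {a : R} (ha : IsUnit a) : χ a ^ 3 = 1 := by
  rw [← MulChar.pow_apply' _ three_ne_zero, h, MulChar.one_apply ha]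

theorem mulChar_inv_apply_of_cube_eq_one (h : χ ^ 3 = 1) (a : R) : χ⁻¹ a = χ a ^ 2 := by
  rw [← mulChar_sq_eq_inv h, MulChar.pow_apply' _ two_ne_zero]

end MulChar

section GaussSum

variable {F k : Type*} [Field F] [Fintype F] [Field k] {χ : MulChar F k} {ψ : AddChar F k}

theorem gaussSum_inv_mul_jacobiSum (hχ3 : χ ^ 3 = 1) (hχ : χ ≠ 1) :
    gaussSum χ⁻¹ ψ * jacobiSum χ χ = gaussSum χ ψ ^ 2 := by
  rw [← mulChar_sq_eq_inv hχ3, pow_two, pow_two]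
  refine jacobiSum_mul_nontrivial ?_ ψ
  rwa [← pow_two, mulChar_sq_eq_inv hχ3, inv_ne_one]

theorem jacobiSum_eq_cube_mul_jacobiSum_inv (hχ3 : χ ^ 3 = 1) (hχ : χ ≠ 1)
    (hg' : gaussSum χ⁻¹ ψ ≠ 0) :
    jacobiSum χ χ = (gaussSum χ ψ / gaussSum χ⁻¹ ψ) ^ 3 * jacobiSum χ⁻¹ χ⁻¹ := by
  have hJ := gaussSum_inv_mul_jacobiSum (ψ := ψ) hχ3 hχ
  have hJ' := gaussSum_inv_mul_jacobiSum (χ := χ⁻¹) (ψ := ψ) (by rw [inv_pow, hχ3, inv_one])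
    (inv_ne_one.2 hχ)
  rw [inv_inv] at hJ'
  field_simp
  linear_combination gaussSum χ⁻¹ ψ ^ 2 * hJ - gaussSum χ ψ ^ 2 * hJ'

end GaussSum

section Frobenius

variable {k : Type*} [Field k] {p q : ℕ} [Fact p.Prime] [CharP k p] [NeZero q]
  {χ : MulChar (ZMod q) k} {ψ : AddChar (ZMod q) k}

theorem gaussSum_pow_char (hpq : p.Coprime q) :
    (χ ^ p) p * gaussSum χ ψ ^ p = gaussSum (χ ^ p) ψ := by
  rw [gaussSum_frob p, AddChar.pow_mulShift]
  exact gaussSum_mulShift (χ ^ p) ψ (ZMod.unitOfCoprime p hpq)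

theorem gaussSum_pow_of_mod_three_eq_one (hpq : p.Coprime q) (hχ3 : χ ^ 3 = 1) (hp : p % 3 = 1) :
    gaussSum χ ψ ^ p = χ p ^ 2 * gaussSum χ ψ := by
  have hfrob := gaussSum_pow_char hpq (χ := χ) (ψ := ψ)
  rw [pow_eq_pow_mod p hχ3, hp, pow_one] at hfrob
  linear_combination χ p ^ 2 * hfrob -
    gaussSum χ ψ ^ p * mulChar_cube_apply hχ3 ((ZMod.isUnit_iff_coprime p q).2 hpq)

theorem gaussSum_pow_of_mod_three_eq_two (hpq : p.Coprime q) (hχ3 : χ ^ 3 = 1) (hp : p % 3 = 2) :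
    gaussSum χ ψ ^ p = χ p * gaussSum χ⁻¹ ψ := by
  have hfrob := gaussSum_pow_char hpq (χ := χ) (ψ := ψ)
  rw [pow_eq_pow_mod p hχ3, hp, mulChar_sq_eq_inv hχ3,
    mulChar_inv_apply_of_cube_eq_one hχ3] at hfrob
  linear_combination χ p * hfrob -
    gaussSum χ ψ ^ p * mulChar_cube_apply hχ3 ((ZMod.isUnit_iff_coprime p q).2 hpq)

end Frobenius

namespace EisensteinInt

theorem ringHomComp_ne_one {R k : Type*} [CommRing R] [Field k] (h3 : (3 : k) ≠ 0)
    (φ : EisensteinInt →+* k) {χ : MulChar R EisensteinInt} (hχ3 : χ ^ 3 = 1) (hχ : χ ≠ 1) :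
    χ.ringHomComp φ ≠ 1 := fun h ↦ hχ <| MulChar.ext fun x ↦ by
  rw [MulChar.one_apply_coe]
  refine eq_one_of_map_eq_one φ h3 (mulChar_cube_apply hχ3 x.isUnit) ?_
  rw [← MulChar.ringHomComp_apply, h, MulChar.one_apply_coe]

variable {q : ℕ} [Fact q.Prime] {χ : MulChar (ZMod q) EisensteinInt}

theorem star_jacobiSum (hχ3 : χ ^ 3 = 1) : star (jacobiSum χ χ) = jacobiSum χ⁻¹ χ⁻¹ := by
  have hstar : χ.ringHomComp (starRingEnd EisensteinInt) = χ⁻¹ := by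
    rw [← mulChar_sq_eq_inv hχ3]
    refine MulChar.ext fun x ↦ ?_
    rw [MulChar.ringHomComp_apply, MulChar.pow_apply_coe]
    exact star_eq_sq_of_cube_eq_one (mulChar_cube_apply hχ3 x.isUnit)
  rw [← hstar, jacobiSum_ringHomComp, starRingEnd_apply]

theorem norm_jacobiSum (hχ3 : χ ^ 3 = 1) (hχ : χ ≠ 1) : (jacobiSum χ χ).norm = q := by
  let f := algebraMap EisensteinInt (FractionRing EisensteinInt)
  have hf : Function.Injective f := IsFractionRing.injective _ _
  have : CharZero (FractionRing EisensteinInt) := charZero_of_injective_algebraMap hf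
  have hchar : ringChar (FractionRing EisensteinInt) ≠ ringChar (ZMod q) := by
    rw [ringChar.eq_zero, ZMod.ringChar_zmod_n]
    exact (NeZero.ne q).symm
  have hf1 : χ.ringHomComp f ≠ 1 := (MulChar.ringHomComp_ne_one_iff hf).2 hχ
  have hf2 : χ.ringHomComp f * χ.ringHomComp f ≠ 1 := by
    rwa [← MulChar.ringHomComp_mul, MulChar.ringHomComp_ne_one_iff hf, ← pow_two,
      mulChar_sq_eq_inv hχ3, inv_ne_one]
  have hmul := jacobiSum_mul_jacobiSum_inv hchar hf1 hf1 hf2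
  rw [MulChar.ringHomComp_inv, jacobiSum_ringHomComp, jacobiSum_ringHomComp,
    ← star_jacobiSum hχ3, ← map_mul, mul_star_eq_norm, ZMod.card, ← map_natCast f] at hmul
  exact_mod_cast hf hmul

/-- An Eisenstein integer congruent to a rational integer prime to `3` modulo `3`: the
normalization in cubic reciprocity. -/
def IsPrimary (α : EisensteinInt) : Prop := 3 ∣ α.im ∧ ¬ 3 ∣ α.re

theorem isPrimary_jacobiSum (hχ3 : χ ^ 3 = 1) (hχ : χ ≠ 1) : IsPrimary (jacobiSum χ χ) := by
  have : Fact (Nat.Prime 3) := ⟨Nat.prime_three⟩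
  have h3q : 3 ∣ q - 1 := by
    simpa [orderOf_eq_prime hχ3 hχ] using χ.orderOf_dvd_card_sub_one
  obtain ⟨z, -, hz⟩ := exists_jacobiSum_eq_neg_one_add (n := 3) (by simp) hχ3 hχ3
    (by rwa [ZMod.card]) isPrimitiveRoot_omega
  rw [hz, show (ω - 1 : EisensteinInt) ^ 2 = -3 * ω by decide]
  simp [IsPrimary]

/-- The cubic residue symbol `(α / p)₃` has value `ξ`, tested through a homomorphism `φ` to a
field `k` of characteristic `p ≠ 3`: there is a cube root `ρ` of `φ α / φ (star α)` on which the
Frobenius acts as `ρ ↦ φ ξ * ρ` if `p ≡ 1 [MOD 3]` and as `ρ ↦ (φ ξ * ρ)⁻¹` if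
`p ≡ 2 [MOD 3]`. -/
def IsCubicSymbol {k : Type*} [Field k] (p : ℕ) (φ : EisensteinInt →+* k)
    (α ξ : EisensteinInt) : Prop :=
  ∃ ρ : k, ρ ≠ 0 ∧ φ α = ρ ^ 3 * φ (star α) ∧
    (p % 3 = 1 → ρ ^ p = φ ξ * ρ) ∧ (p % 3 = 2 → φ ξ * ρ ^ p * ρ = 1)

namespace IsCubicSymbol

variable {k : Type*} [Field k] {p : ℕ} {φ : EisensteinInt →+* k} {α β ξ η : EisensteinInt}

theorem of_star_eq (h : star α = α) : IsCubicSymbol p φ α 1 :=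
  ⟨1, one_ne_zero, by simp [h], by simp, by simp⟩

theorem mul (hα : IsCubicSymbol p φ α ξ) (hβ : IsCubicSymbol p φ β η) :
    IsCubicSymbol p φ (α * β) (ξ * η) := by
  obtain ⟨ρ, hρ, hρα, hρ1, hρ2⟩ := hα
  obtain ⟨σ, hσ, hσβ, hσ1, hσ2⟩ := hβ
  refine ⟨ρ * σ, mul_ne_zero hρ hσ, ?_, fun h ↦ ?_, fun h ↦ ?_⟩
  · rw [star_mul', map_mul, map_mul, hρα, hσβ]; ring
  · rw [mul_pow, hρ1 h, hσ1 h, map_mul]; ring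
  · rw [map_mul, mul_pow]; linear_combination φ η * σ ^ p * σ * hρ2 h + hσ2 h

theorem map_eq_one_of_map_star [Fact p.Prime] [CharP k p] (hp3 : p ≠ 3)
    (h : IsCubicSymbol p φ α ξ) (hα : φ α ≠ 0) {ε : ℤ} (hε : ε ^ 2 = 1)
    (hstar : φ α = ε * φ (star α)) : φ ξ = 1 := by
  obtain ⟨ρ, hρ, hρα, hρ1, hρ2⟩ := h
  have hε' : (ε : k) ^ 2 = 1 := by rw [← Int.cast_pow, hε, Int.cast_one]
  have hcube : (ε * ρ) ^ 3 = 1 := by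
    have hα' : φ (star α) ≠ 0 := fun h0 ↦ hα (by rw [hstar, h0, mul_zero])
    refine mul_right_cancel₀ hα' ?_
    linear_combination ε ^ 3 * (hstar - hρα) + (ε ^ 2 + 1) * φ (star α) * hε'
  have hfrob : ε * ρ ^ p = (ε * ρ) ^ p := by
    rw [mul_pow]; rw [← frobenius_def (p := p) (ε : k), map_intCast]
  rw [pow_eq_pow_mod p hcube] at hfrob
  have hp : p % 3 ≠ 0 := fun h0 ↦ hp3 <|
    ((Nat.prime_dvd_prime_iff_eq Nat.prime_three Fact.out).1 (Nat.dvd_of_mod_eq_zero h0)).symm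
  obtain h | h : p % 3 = 1 ∨ p % 3 = 2 := by omega
  · rw [h, hρ1 h] at hfrob
    refine mul_right_cancel₀ hρ ?_
    linear_combination ε * hfrob - (φ ξ * ρ - ρ) * hε'
  · rw [h] at hfrob
    linear_combination hρ2 h - φ ξ * ρ * ε * hfrob + φ ξ * ρ * ρ ^ p * hε' - φ ξ * hcube

theorem of_jacobiSum [IsAlgClosed k] [Fact p.Prime] [CharP k p] (hpq : p ≠ q) (hp3 : p ≠ 3)
    (φ : EisensteinInt →+* k) (hχ3 : χ ^ 3 = 1) (hχ : χ ≠ 1) :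
    IsCubicSymbol p φ (jacobiSum χ χ) (χ p) := by
  have h3 : (3 : k) ≠ 0 := by
    exact_mod_cast CharP.cast_ne_zero_of_ne_of_prime k Nat.prime_three hp3
  have : NeZero (q : k) := ⟨CharP.cast_ne_zero_of_ne_of_prime k Fact.out hpq⟩
  have hq : (Fintype.card (ZMod q) : k) ≠ 0 := by rw [ZMod.card]; exact NeZero.ne _
  have hcop : p.Coprime q := (Nat.coprime_primes Fact.out Fact.out).2 hpq
  obtain ⟨ζ, hζ⟩ := HasEnoughRootsOfUnity.exists_primitiveRoot k q
  let ψ := AddChar.zmodChar q hζ.pow_eq_one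
  have hψ : ψ.IsPrimitive := AddChar.zmodChar_primitive_of_primitive_root q hζ
  let χk := χ.ringHomComp φ
  have hχk3 : χk ^ 3 = 1 := by rw [MulChar.ringHomComp_pow, hχ3, MulChar.ringHomComp_one]
  have hχk3' : χk⁻¹ ^ 3 = 1 := by rw [inv_pow, hχk3, inv_one]
  have hχk : χk ≠ 1 := ringHomComp_ne_one h3 φ hχ3 hχ
  have hg : gaussSum χk ψ ≠ 0 := gaussSum_ne_zero_of_nontrivial hq hχk hψ
  have hg' : gaussSum χk⁻¹ ψ ≠ 0 := gaussSum_ne_zero_of_nontrivial hq (inv_ne_one.2 hχk) hψ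
  have hx : φ (χ p) ^ 3 = 1 := mulChar_cube_apply hχk3 ((ZMod.isUnit_iff_coprime p q).2 hcop)
  have hx0 : φ (χ p) ≠ 0 := fun h ↦ by simp [h] at hx
  have hinv : χk⁻¹ p = φ (χ p) ^ 2 := mulChar_inv_apply_of_cube_eq_one hχk3 _
  refine ⟨gaussSum χk ψ / gaussSum χk⁻¹ ψ, div_ne_zero hg hg', ?_, fun h ↦ ?_, fun h ↦ ?_⟩
  · rw [star_jacobiSum hχ3, ← jacobiSum_ringHomComp, ← jacobiSum_ringHomComp,
      ← MulChar.ringHomComp_inv]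
    exact jacobiSum_eq_cube_mul_jacobiSum_inv hχk3 hχk hg'
  · rw [div_pow, gaussSum_pow_of_mod_three_eq_one hcop hχk3 h,
      gaussSum_pow_of_mod_three_eq_one hcop hχk3' h, hinv, MulChar.ringHomComp_apply]
    field_simp
    linear_combination -hx
  · rw [div_pow, gaussSum_pow_of_mod_three_eq_two hcop hχk3 h,
      gaussSum_pow_of_mod_three_eq_two hcop hχk3' h, hinv, inv_inv, MulChar.ringHomComp_apply]
    field_simp

end IsCubicSymbol

section Factorization

variable {q : ℕ} [Fact q.Prime] {α π δ : EisensteinInt}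

theorem natCast_dvd_of_dvd_norm (hq : q % 3 = 2) (h : (q : ℤ) ∣ α.norm) :
    (q : EisensteinInt) ∣ α := by
  let k := AlgebraicClosure (ZMod q)
  have h3 : (3 : k) ≠ 0 := by
    exact_mod_cast CharP.cast_ne_zero_of_ne_of_prime k (p := q) Nat.prime_three (by grind)
  obtain ⟨φ⟩ := nonempty_ringHom (k := k)
  have hstar := map_pow_char_of_mod_three_eq_two φ hq α
  have hα : φ α * φ (star α) = 0 := by
    rw [← map_mul, mul_star_eq_norm, map_intCast, CharP.intCast_eq_zero_iff k q]
    exact h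
  have hα0 : φ α = 0 := by
    rw [← hstar, mul_eq_zero, pow_eq_zero_iff (NeZero.ne q), or_self] at hα
    exact hα
  refine natCast_dvd_of_map_eq_zero h3 φ hα0 ?_
  rw [← hstar, hα0, zero_pow (NeZero.ne q)]

theorem dvd_or_star_dvd_of_dvd_norm (hq3 : q ≠ 3) (hπ : π.norm = q) (h : (q : ℤ) ∣ α.norm) :
    π ∣ α ∨ star π ∣ α := by
  let k := AlgebraicClosure (ZMod q)
  have h3 : (3 : k) ≠ 0 := by
    exact_mod_cast CharP.cast_ne_zero_of_ne_of_prime k Nat.prime_three hq3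
  obtain ⟨φ⟩ := nonempty_ringHom (k := k)
  have hmul {z : EisensteinInt} (hz : (q : ℤ) ∣ z.norm) : φ z = 0 ∨ φ (star z) = 0 := by
    rwa [← mul_eq_zero, ← map_mul, mul_star_eq_norm, map_intCast, CharP.intCast_eq_zero_iff k q]
  have hdvd : (q : EisensteinInt) ∣ α * star π ∨ (q : EisensteinInt) ∣ α * π := by
    obtain hα | hα := hmul h <;> obtain hπ' | hπ' := hmul (dvd_of_eq hπ.symm)
    · exact .inl (natCast_dvd_of_map_eq_zero h3 φ (by simp [hα]) (by simp [hπ']))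
    · exact .inr (natCast_dvd_of_map_eq_zero h3 φ (by simp [hα]) (by simp [hπ']))
    · exact .inr (natCast_dvd_of_map_eq_zero h3 φ (by simp [hπ']) (by simp [hα]))
    · exact .inl (natCast_dvd_of_map_eq_zero h3 φ (by simp [hπ']) (by simp [hα]))
  have hπ0 : π ≠ 0 := by
    rintro rfl
    rw [QuadraticAlgebra.norm_zero, eq_comm, Nat.cast_eq_zero] at hπ
    exact NeZero.ne q hπ
  have hππ : (q : EisensteinInt) = π * star π := by rw [mul_star_eq_norm, hπ, Int.cast_natCast]
  refine hdvd.imp (fun h ↦ ?_) fun h ↦ ?_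
  · rwa [hππ, mul_dvd_mul_iff_right (star_ne_zero.2 hπ0)] at h
  · rwa [hππ, mul_comm, mul_dvd_mul_iff_right hπ0] at h

theorem isPrimary_natCast {n : ℕ} : IsPrimary (n : EisensteinInt) ↔ ¬ 3 ∣ n := by
  simp only [IsPrimary, QuadraticAlgebra.re_natCast, QuadraticAlgebra.im_natCast]; omega

theorem IsPrimary.right_of_mul (hπ : IsPrimary π) (h : IsPrimary (π * δ)) : IsPrimary δ := by
  obtain ⟨⟨a, ha⟩, hπre⟩ := hπ
  obtain ⟨him, hre⟩ := h
  have hdvd : (3 : ℤ) ∣ π.re * δ.im := by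
    obtain ⟨c, hc⟩ := him
    rw [QuadraticAlgebra.im_mul, ha] at hc
    exact ⟨c - a * δ.re + a * δ.im, by linear_combination hc⟩
  have hδ : 3 ∣ δ.im := (Int.prime_three.dvd_or_dvd hdvd).resolve_left hπre
  refine ⟨hδ, fun h ↦ hre ?_⟩
  rw [QuadraticAlgebra.re_mul]
  exact dvd_add (h.mul_left _) (hδ.mul_left _)

theorem IsPrimary.not_three_dvd_norm (h : IsPrimary α) : ¬ 3 ∣ α.norm := by
  obtain ⟨⟨a, ha⟩, hre⟩ := h
  rintro ⟨c, hc⟩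
  rw [norm_eq, ha] at hc
  exact hre (Int.prime_three.dvd_of_dvd_pow (n := 2) ⟨
    c + α.re * a - 3 * a ^ 2, by linear_combination hc⟩)

theorem IsPrimary.exists_factor (h : IsPrimary α) (hα : α.norm ≠ 1) :
    ∃ π δ, α = π * δ ∧ π.norm ≠ 1 ∧ IsPrimary π ∧ (star π = π ∨
      ∃ (q : ℕ) (_ : Fact q.Prime) (χ : MulChar (ZMod q) EisensteinInt),
        χ ^ 3 = 1 ∧ χ ≠ 1 ∧ π = jacobiSum χ χ) := by
  obtain ⟨q, hq, hqα⟩ := Nat.exists_prime_and_dvd (n := α.norm.natAbs)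
    (by have := norm_nonneg α; omega)
  rw [← Int.natCast_dvd] at hqα
  have : Fact q.Prime := ⟨hq⟩
  have hq3 : ¬ 3 ∣ q := fun h3 ↦ h.not_three_dvd_norm ((Int.natCast_dvd_natCast.2 h3).trans hqα)
  obtain hq' | hq' : q % 3 = 1 ∨ q % 3 = 2 := by omega
  · obtain ⟨χ, hχ⟩ := MulChar.exists_mulChar_orderOf (ZMod q) (n := 3)
      (by rw [ZMod.card]; omega) isPrimitiveRoot_omega
    have hχ3 : χ ^ 3 = 1 := hχ ▸ pow_orderOf_eq_one χ
    have hχ1 : χ ≠ 1 := fun h ↦ by simp [h] at hχ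
    have hχ3' : χ⁻¹ ^ 3 = 1 := by rw [inv_pow, hχ3, inv_one]
    have hχ1' : χ⁻¹ ≠ 1 := inv_ne_one.2 hχ1
    obtain ⟨δ, hδ⟩ | ⟨δ, hδ⟩ :=
      dvd_or_star_dvd_of_dvd_norm (by omega) (norm_jacobiSum hχ3 hχ1) hqα
    · refine ⟨_, δ, hδ, ?_, isPrimary_jacobiSum hχ3 hχ1, .inr ⟨q, this, χ, hχ3, hχ1, rfl⟩⟩
      rw [norm_jacobiSum hχ3 hχ1]
      exact_mod_cast hq.one_lt.ne'
    · rw [star_jacobiSum hχ3] at hδ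
      refine ⟨_, δ, hδ, ?_, isPrimary_jacobiSum hχ3' hχ1', .inr ⟨q, this, χ⁻¹, hχ3', hχ1', rfl⟩⟩
      rw [norm_jacobiSum hχ3' hχ1']
      exact_mod_cast hq.one_lt.ne'
  · obtain ⟨δ, hδ⟩ := natCast_dvd_of_dvd_norm hq' hqα
    refine ⟨_, δ, hδ, ?_, isPrimary_natCast.2 hq3, .inl (star_natCast q)⟩
    have := hq.one_lt
    rw [norm_eq, QuadraticAlgebra.re_natCast, QuadraticAlgebra.im_natCast]
    nlinarith

end Factorization

/-- Cubic reciprocity for the values of `(α / p)₃` at rational primes `p`: they are the values at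
`p` of the cubic Dirichlet character `χ` modulo the norm of `α`. -/
structure IsCubicResidueChar (α : EisensteinInt) {N : ℕ} (χ : DirichletCharacter EisensteinInt N) :
    Prop where
  norm_eq : α.norm = N
  cube_eq_one : χ ^ 3 = 1
  isCubicSymbol (p : ℕ) [Fact p.Prime] (hp3 : p ≠ 3) (hpN : p.Coprime N)
    (φ : EisensteinInt →+* AlgebraicClosure (ZMod p)) : IsCubicSymbol p φ α (χ p)

theorem changeLevel_natCast {R : Type*} [CommMonoidWithZero R] {m n a : ℕ}
    (χ : DirichletCharacter R m) (h : m ∣ n) (ha : a.Coprime n) :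
    DirichletCharacter.changeLevel h χ a = χ a := by
  exact_mod_cast DirichletCharacter.changeLevel_eq_cast_of_dvd' χ h (Nat.isCoprime_iff_coprime.2 ha)

namespace IsCubicResidueChar

variable {α β : EisensteinInt} {M N : ℕ} {χ : DirichletCharacter EisensteinInt M}
  {η : DirichletCharacter EisensteinInt N}

theorem of_star_eq (h : star α = α) (hN : α.norm = N) :
    IsCubicResidueChar α (1 : DirichletCharacter EisensteinInt N) where
  norm_eq := hN
  cube_eq_one := one_pow 3
  isCubicSymbol _ _ _ hp _ := by
    rw [MulChar.one_apply ((ZMod.isUnit_iff_coprime _ N).2 hp)]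
    exact .of_star_eq h

theorem of_jacobiSum {q : ℕ} [Fact q.Prime] {χ : MulChar (ZMod q) EisensteinInt}
    (hχ3 : χ ^ 3 = 1) (hχ : χ ≠ 1) : IsCubicResidueChar (jacobiSum χ χ) χ where
  norm_eq := norm_jacobiSum hχ3 hχ
  cube_eq_one := hχ3
  isCubicSymbol _ _ hp3 hpq φ :=
    .of_jacobiSum ((Nat.coprime_primes Fact.out Fact.out).1 hpq) hp3 φ hχ3 hχ

theorem mul (hα : IsCubicResidueChar α χ) (hβ : IsCubicResidueChar β η) :
    IsCubicResidueChar (α * β)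
      (χ.changeLevel (dvd_mul_right M N) * η.changeLevel (dvd_mul_left N M)) where
  norm_eq := by rw [map_mul, hα.norm_eq, hβ.norm_eq, Nat.cast_mul]
  cube_eq_one := by
    rw [mul_pow, ← map_pow, ← map_pow, hα.cube_eq_one, hβ.cube_eq_one, map_one, map_one, one_mul]
  isCubicSymbol p _ hp3 hp φ := by
    rw [MulChar.mul_apply, changeLevel_natCast _ _ hp, changeLevel_natCast _ _ hp]
    exact (hα.isCubicSymbol p hp3 hp.coprime_mul_right_right φ).mul
      (hβ.isCubicSymbol p hp3 hp.coprime_mul_left_right φ)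

end IsCubicResidueChar

theorem IsPrimary.exists_isCubicResidueChar {α : EisensteinInt} (h : IsPrimary α) {N : ℕ}
    (hN : α.norm = N) : ∃ χ : DirichletCharacter EisensteinInt N, IsCubicResidueChar α χ := by
  induction N using Nat.strong_induction_on generalizing α with
  | _ N ih =>
    by_cases h1 : α.norm = 1
    · refine ⟨1, .of_star_eq (star_eq_self_iff.2 ?_) hN⟩
      obtain ⟨⟨a, ha⟩, -⟩ := h
      rw [norm_eq, ha] at h1
      have ha0 : a = 0 := by nlinarith only [h1, sq_nonneg (2 * α.re - 3 * a), sq_nonneg a]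
      rw [ha, ha0, mul_zero]
    · obtain ⟨π, δ, rfl, hπ1, hπ, hπ'⟩ := h.exists_factor h1
      obtain ⟨m, hm⟩ := Int.eq_ofNat_of_zero_le (norm_nonneg π)
      obtain ⟨n, hn⟩ := Int.eq_ofNat_of_zero_le (norm_nonneg δ)
      obtain rfl : N = m * n := by rw [map_mul, hm, hn] at hN; exact_mod_cast hN.symm
      have hmn0 : m * n ≠ 0 := fun h0 ↦ h.not_three_dvd_norm (by simp [hN, h0])
      have hm1 : m ≠ 1 := by rintro rfl; exact hπ1 hm
      have hlt : n < m * n := by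
        rw [mul_ne_zero_iff] at hmn0
        exact lt_mul_of_one_lt_left (by omega) (by omega)
      obtain ⟨η, hη⟩ := ih n hlt (hπ.right_of_mul h) hn
      obtain hstar | ⟨q, _, χ, hχ3, hχ, rfl⟩ := hπ'
      · exact ⟨_, (IsCubicResidueChar.of_star_eq hstar hm).mul hη⟩
      · obtain rfl : q = m := by exact_mod_cast (norm_jacobiSum hχ3 hχ).symm.trans hm
        exact ⟨_, (IsCubicResidueChar.of_jacobiSum hχ3 hχ).mul hη⟩

namespace IsCubicResidueChar

variable {α : EisensteinInt} {N : ℕ} {χ : DirichletCharacter EisensteinInt N}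

theorem apply_prime_eq_one (hχ : IsCubicResidueChar α χ) {ℓ : ℕ} [Fact ℓ.Prime] (hℓ3 : ℓ ≠ 3)
    (hℓN : ℓ.Coprime N) {ε : ℤ} (hε : ε ^ 2 = 1) (hdvd : (ℓ : EisensteinInt) ∣ α - ε * star α) :
    χ ℓ = 1 := by
  let k := AlgebraicClosure (ZMod ℓ)
  have h3 : (3 : k) ≠ 0 := by
    exact_mod_cast CharP.cast_ne_zero_of_ne_of_prime k Nat.prime_three hℓ3
  obtain ⟨φ⟩ := nonempty_ringHom (k := k)
  have hα : φ α ≠ 0 := fun h0 ↦ by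
    have hN := congrArg φ (mul_star_eq_norm α)
    rw [map_mul, h0, zero_mul, hχ.norm_eq, Int.cast_natCast, map_natCast, eq_comm,
      CharP.cast_eq_zero_iff k ℓ] at hN
    exact ((Nat.Prime.coprime_iff_not_dvd Fact.out).1 hℓN) hN
  have hstar : φ α = ε * φ (star α) := by
    obtain ⟨γ, hγ⟩ := hdvd
    have := congrArg φ hγ
    rw [map_mul, map_natCast, CharP.cast_eq_zero, zero_mul, map_sub, map_mul, map_intCast] at this
    exact sub_eq_zero.1 this
  have hcube : χ ℓ ^ 3 = 1 :=
    mulChar_cube_apply hχ.cube_eq_one ((ZMod.isUnit_iff_coprime ℓ N).2 hℓN)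
  exact eq_one_of_map_eq_one φ h3 hcube
    ((hχ.isCubicSymbol ℓ hℓ3 hℓN φ).map_eq_one_of_map_star hℓ3 hα hε hstar)

theorem apply_natCast_eq_one (hχ : IsCubicResidueChar α χ) {n : ℕ} (hn0 : n ≠ 0) (hn3 : ¬ 3 ∣ n)
    (hnN : n.Coprime N) {ε : ℤ} (hε : ε ^ 2 = 1) (hdvd : (n : EisensteinInt) ∣ α - ε * star α) :
    χ n = 1 := by
  induction n using Nat.recOnMul with
  | zero => exact absurd rfl hn0
  | one => rw [Nat.cast_one, map_one]
  | prime ℓ hℓ =>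
    have : Fact ℓ.Prime := ⟨hℓ⟩
    exact hχ.apply_prime_eq_one (fun h ↦ hn3 h.symm.dvd) hnN hε hdvd
  | mul a b iha ihb =>
    rw [mul_ne_zero_iff] at hn0
    rw [Nat.cast_mul] at hdvd
    rw [Nat.cast_mul, map_mul,
      iha hn0.1 (fun h ↦ hn3 (h.mul_right b)) hnN.coprime_mul_right (dvd_of_mul_right_dvd hdvd),
      ihb hn0.2 (fun h ↦ hn3 (h.mul_left a)) hnN.coprime_mul_left (dvd_of_mul_left_dvd hdvd),
      one_mul]

theorem apply_two_eq_one_iff (hχ : IsCubicResidueChar α χ) (hN : Odd N) :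
    χ 2 = 1 ↔ Even α.im := by
  have : Fact (Nat.Prime 2) := ⟨Nat.prime_two⟩
  have h2N : Nat.Coprime 2 N := Nat.coprime_two_left.2 hN
  constructor
  · intro h
    let k := AlgebraicClosure (ZMod 2)
    obtain ⟨φ⟩ := nonempty_ringHom (k := k)
    obtain ⟨ρ, -, hρ, -, hρ2⟩ := hχ.isCubicSymbol 2 (by simp) h2N φ
    have hcube : ρ ^ 3 = 1 := by simpa [h, ← pow_succ] using hρ2 rfl
    have h20 : (2 : k) = 0 := CharTwo.two_eq_zero
    have him : (α.im : k) = 0 := by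
      have := congrArg φ (sub_star α)
      simp only [map_sub, map_mul, map_add, map_one, map_intCast, map_ofNat] at this
      linear_combination -this + hρ + hcube * φ (star α) - α.im * φ ω * h20
    rwa [CharP.intCast_eq_zero_iff k 2, Nat.cast_two, ← even_iff_two_dvd] at him
  · rintro ⟨a, ha⟩
    exact_mod_cast hχ.apply_prime_eq_one (ℓ := 2) (by simp) h2N (one_pow 2)
      (by rw [Int.cast_one, one_mul, sub_star, ha, ← two_mul, Int.cast_mul]
          exact (dvd_mul_right _ _).mul_right _)

end IsCubicResidueChar

end EisensteinInt

/-- The principal binary quadratic form of discriminant `-11`, the norm form of the ring of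
integers of `ℚ(√-11)`. -/
def principalForm (u v : ℤ) : ℤ := u ^ 2 + u * v + 3 * v ^ 2

/-- Let `2 * u + v = v * √-11` in a field of characteristic `p ∣ principalForm u v`, with
`p ∤ 2 * v`. Then this Eisenstein integer maps to `v / 2` times `19 + 3 * √33`, the cube of a
Lagrange resolvent of `X ^ 3 - X ^ 2 - X - 1`. -/
def resolventCube (u v : ℤ) : EisensteinInt := ⟨3 * u + 11 * v, 6 * u + 3 * v⟩

section ResolventCube

open EisensteinInt

variable {u v : ℤ}

theorem norm_resolventCube : (resolventCube u v).norm = 16 * v ^ 2 + 27 * principalForm u v := by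
  rw [norm_eq, resolventCube, principalForm]; ring

theorem resolventCube_add_star :
    resolventCube u v + star (resolventCube u v) = 19 * (v : EisensteinInt) := by
  rw [add_star, resolventCube]; push_cast; ring

theorem isPrimary_resolventCube (hv : ¬ 3 ∣ v) : IsPrimary (resolventCube u v) := by
  simp only [IsPrimary, resolventCube]; omega

theorem even_im_resolventCube : Even (resolventCube u v).im ↔ Even v := by
  simp only [resolventCube, Int.even_iff]; omega

theorem odd_norm_resolventCube (h : Odd (principalForm u v)) : Odd (resolventCube u v).norm := by
  rw [norm_resolventCube]
  exact Even.add_odd ((by decide : Even (16 : ℤ)).mul_right _) ((by decide : Odd (27 : ℤ)).mul h)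

theorem isCoprime_norm_resolventCube (hv : ¬ 3 ∣ v) (h : IsCoprime v (principalForm u v)) :
    IsCoprime v (resolventCube u v).norm := by
  have h27 : IsCoprime v 27 :=
    ((Int.prime_three.coprime_iff_not_dvd.2 hv).symm.pow_right (n := 3))
  rw [norm_resolventCube, pow_two, mul_left_comm, IsCoprime.mul_add_left_right_iff]
  exact h27.mul_right h

theorem isCoprime_principalForm_norm_resolventCube (hodd : Odd (principalForm u v))
    (h : IsCoprime v (principalForm u v)) :
    IsCoprime (principalForm u v) (resolventCube u v).norm := by
  have h16 : IsCoprime (principalForm u v) 16 :=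
    (Int.isCoprime_two_right.2 hodd).pow_right (n := 4)
  rw [norm_resolventCube, mul_comm 27, IsCoprime.add_mul_left_right_iff]
  exact h16.mul_right h.symm.pow_right

variable {n N : ℕ} {χ : DirichletCharacter EisensteinInt N}

/- `3 ^ 3 * n` is `-16 * v ^ 2 = (-2) ^ 3 * 2 * v ^ 2` modulo the norm of `resolventCube u v`. -/
theorem EisensteinInt.IsCubicResidueChar.apply_principalForm
    (hχ : IsCubicResidueChar (resolventCube u v) χ) (hn : principalForm u v = n) (hn2 : Odd n)
    (hv : ¬ 3 ∣ v) (hcop : IsCoprime v n) : χ n = χ 2 := by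
  have hN := hχ.norm_eq
  have hvN : v.natAbs.Coprime N := by
    rw [← Nat.isCoprime_iff_coprime, Int.natCast_natAbs, IsCoprime.abs_left_iff, ← hN]
    exact isCoprime_norm_resolventCube hv (hn ▸ hcop)
  have h2N : IsUnit (-2 : ZMod N) := by
    have hodd : Odd (N : ℤ) := hN ▸ odd_norm_resolventCube (hn ▸ (Int.odd_coe_nat n).2 hn2)
    exact_mod_cast ((ZMod.isUnit_iff_coprime 2 N).2
      (Nat.coprime_two_left.2 ((Int.odd_coe_nat N).1 hodd))).neg
  have h3N : IsUnit (3 : ZMod N) := by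
    have h3 : ¬ (3 : ℤ) ∣ N := hN ▸ (isPrimary_resolventCube hv).not_three_dvd_norm
    exact_mod_cast (ZMod.isUnit_iff_coprime 3 N).2
      ((Nat.Prime.coprime_iff_not_dvd Nat.prime_three).2 (by exact_mod_cast h3))
  have hχv : χ v.natAbs = 1 := by
    refine hχ.apply_natCast_eq_one (ε := -1) (by rintro h0; simp_all) (by omega) hvN
      (by norm_num) ?_
    rw [Int.cast_neg, Int.cast_one, neg_one_mul, sub_neg_eq_add, resolventCube_add_star]
    have := map_dvd (Int.castRingHom EisensteinInt) (Int.natAbs_dvd.2 (dvd_refl v))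
    rw [map_natCast, eq_intCast] at this
    exact this.mul_left _
  have hcube {a : ZMod N} (ha : IsUnit a) : χ (a ^ 3) = 1 := by
    rw [map_pow, mulChar_cube_apply hχ.cube_eq_one ha]
  have hmod : (3 : ZMod N) ^ 3 * n = (-2) ^ 3 * 2 * v.natAbs ^ 2 := by
    have h0 : 16 * (v : ZMod N) ^ 2 + 27 * n = 0 := by
      rw [norm_resolventCube, hn] at hN
      simpa using congrArg (Int.cast : ℤ → ZMod N) hN
    have hsq : (v.natAbs : ZMod N) ^ 2 = v ^ 2 := by
      exact_mod_cast congrArg (Int.cast : ℤ → ZMod N) (Int.natAbs_sq v)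
    rw [hsq]
    linear_combination h0
  calc χ n = χ (3 ^ 3 * n) := by rw [map_mul, hcube h3N, one_mul]
    _ = χ 2 := by
      rw [hmod, map_mul, map_mul, map_pow χ (v.natAbs : ZMod N), hχv, hcube h2N, one_mul,
        one_pow, mul_one]

theorem exists_isCubicResidueChar_resolventCube (hn : principalForm u v = n) (hn2 : Odd n)
    (hv : ¬ 3 ∣ v) (hcop : IsCoprime v n) :
    ∃ (N : ℕ) (χ : DirichletCharacter EisensteinInt N), IsCubicResidueChar (resolventCube u v) χ ∧
      n.Coprime N ∧ χ ^ 3 = 1 ∧ χ n = χ 2 ∧ (χ 2 = 1 ↔ Even v) := by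
  obtain ⟨N, hN⟩ := Int.eq_ofNat_of_zero_le (norm_nonneg (resolventCube u v))
  obtain ⟨χ, hχ⟩ := (isPrimary_resolventCube hv).exists_isCubicResidueChar hN
  have hodd : Odd (principalForm u v) := hn ▸ (Int.odd_coe_nat n).2 hn2
  refine ⟨N, χ, hχ, ?_, hχ.cube_eq_one, hχ.apply_principalForm hn hn2 hv hcop, ?_⟩
  · rw [← Nat.isCoprime_iff_coprime, ← hN, ← hn]
    exact isCoprime_principalForm_norm_resolventCube hodd (hn ▸ hcop)
  · rw [← even_im_resolventCube]
    refine hχ.apply_two_eq_one_iff ?_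
    exact (Int.odd_coe_nat N).1 (hN ▸ odd_norm_resolventCube hodd)

variable {p : ℕ} [Fact p.Prime]

theorem not_dvd_of_principalForm_eq_prime (hp : principalForm u v = p) : ¬ (p : ℤ) ∣ v := by
  intro hv
  have hprime : Prime (p : ℤ) := Nat.prime_iff_prime_int.1 Fact.out
  have hu : (p : ℤ) ∣ u := by
    refine hprime.dvd_of_dvd_pow (n := 2) ?_
    have h : u ^ 2 = p - (u + 3 * v) * v := by rw [← hp, principalForm]; ring
    exact h ▸ dvd_sub (dvd_refl _) (hv.mul_left _)
  obtain ⟨a, rfl⟩ := hu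
  obtain ⟨b, rfl⟩ := hv
  refine hprime.not_isUnit (IsUnit.of_mul_eq_one (a ^ 2 + a * b + 3 * b ^ 2) ?_)
  refine mul_left_cancel₀ hprime.ne_zero ?_
  rw [mul_one]
  nth_rw 3 [← hp]
  rw [principalForm]
  ring

theorem principalForm_mul_sqrt_neg_eleven (u v : ℤ) :
    principalForm (-(u + 6 * v)) (2 * u + v) = 11 * principalForm u v := by
  rw [principalForm, principalForm]; ring

theorem four_mul_principalForm (u v : ℤ) :
    4 * principalForm u v = (2 * u + v) ^ 2 + 11 * v ^ 2 := by
  rw [principalForm]; ring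

theorem EisensteinInt.IsCubicResidueChar.apply_eleven
    (hχ : IsCubicResidueChar (resolventCube (-(u + 6 * v)) (2 * u + v)) χ)
    (hN : Nat.Coprime 11 N) : χ 11 = 1 := by
  refine mod_cast hχ.apply_natCast_eq_one (n := 11) (by norm_num) (by norm_num) hN (one_pow 2) ?_
  rw [Int.cast_one, one_mul, sub_star]
  refine Dvd.dvd.mul_right ⟨((-3 * v : ℤ) : EisensteinInt), ?_⟩ _
  simp only [resolventCube]
  push_cast
  ring

theorem not_dvd_two_mul_add_of_dvd (hp : principalForm u v = p) {q : ℕ} (hq : q.Prime)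
    (hq2 : q ≠ 2) (hqp : q ≠ p) (hdvd : (q : ℤ) ∣ 11 * v ^ 2) : ¬ (q : ℤ) ∣ 2 * u + v := by
  intro h
  have h4p : (q : ℤ) ∣ (4 * p : ℕ) := by
    push_cast
    rw [← hp, four_mul_principalForm]
    exact dvd_add (h.pow two_ne_zero) hdvd
  obtain h | h := (Nat.Prime.dvd_mul hq).1 (Int.natCast_dvd_natCast.1 h4p)
  · exact hq2 ((Nat.prime_dvd_prime_iff_eq hq Nat.prime_two).1 (hq.dvd_of_dvd_pow (n := 2) h))
  · exact hqp ((Nat.prime_dvd_prime_iff_eq hq Fact.out).1 h)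

theorem not_dvd_two_mul_add_of_principalForm_eq_prime (hp11 : p ≠ 11)
    (hp : principalForm u v = p) : ¬ (p : ℤ) ∣ 2 * u + v := by
  intro h
  have hprime : Prime (p : ℤ) := Nat.prime_iff_prime_int.1 Fact.out
  have h11v : (p : ℤ) ∣ 11 * v ^ 2 := by
    rw [← dvd_add_right (h.pow two_ne_zero), ← four_mul_principalForm, hp]
    exact dvd_mul_left _ _
  obtain h | h := hprime.dvd_or_dvd h11v
  · exact hp11 ((Nat.prime_dvd_prime_iff_eq Fact.out (by norm_num)).1 (by exact_mod_cast h))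
  · exact not_dvd_of_principalForm_eq_prime hp (hprime.dvd_of_dvd_pow h)

/- If `3 ∣ v`, the resolvent cube is not primary; multiplying `(2 * u + v + v * √-11) / 2` by
`√-11` gives a representation of `11 * p` for which it is. -/
theorem exists_isCubicSymbol_resolventCube (hp2 : p ≠ 2) (hp3 : p ≠ 3) (hp11 : p ≠ 11)
    (hp : principalForm u v = p) :
    ∃ (u' v' : ℤ) (ξ : EisensteinInt), (p : ℤ) ∣ principalForm u' v' ∧ ¬ (p : ℤ) ∣ v' ∧
      ξ ^ 3 = 1 ∧ (ξ = 1 ↔ Even v) ∧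
      ∀ φ : EisensteinInt →+* AlgebraicClosure (ZMod p),
        IsCubicSymbol p φ (resolventCube u' v') ξ := by
  have hprime : Prime (p : ℤ) := Nat.prime_iff_prime_int.1 Fact.out
  have hodd : Odd p := Nat.Prime.odd_of_ne_two Fact.out hp2
  have hcube {N : ℕ} {χ : DirichletCharacter EisensteinInt N} (hχ : χ ^ 3 = 1)
      (hpN : p.Coprime N) : χ p ^ 3 = 1 :=
    mulChar_cube_apply hχ ((ZMod.isUnit_iff_coprime p N).2 hpN)
  by_cases hv : 3 ∣ v
  · have hpw := not_dvd_two_mul_add_of_principalForm_eq_prime hp11 hp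
    have h3w : ¬ 3 ∣ 2 * u + v := not_dvd_two_mul_add_of_dvd hp Nat.prime_three (by norm_num)
      hp3.symm ((hv.pow two_ne_zero).mul_left _)
    have h11w : ¬ 11 ∣ 2 * u + v := not_dvd_two_mul_add_of_dvd (q := 11) hp (by norm_num)
      (by norm_num) hp11.symm (dvd_mul_right _ _)
    have hform : principalForm (-(u + 6 * v)) (2 * u + v) = (11 * p : ℕ) := by
      rw [principalForm_mul_sqrt_neg_eleven, hp, Nat.cast_mul, Nat.cast_ofNat]
    have hw : IsCoprime (2 * u + v) (11 * p : ℕ) := by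
      have h11 : Prime (11 : ℤ) := by norm_num
      rw [Nat.cast_mul]
      exact (h11.coprime_iff_not_dvd.2 h11w).symm.mul_right
        (hprime.coprime_iff_not_dvd.2 hpw).symm
    obtain ⟨N, χ, hχ, hcop, hχ3, hχp, hχ2⟩ := exists_isCubicResidueChar_resolventCube hform
      ((by decide : Odd 11).mul hodd) h3w hw
    have hpN := hcop.coprime_mul_left
    have hdvd : (p : ℤ) ∣ (11 * p : ℕ) := Int.natCast_dvd_natCast.2 (dvd_mul_left p 11)
    refine ⟨_, _, χ p, hform ▸ hdvd, hpw, hcube hχ3 hpN, ?_, hχ.isCubicSymbol p hp3 hpN⟩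
    rw [Nat.cast_mul, map_mul, Nat.cast_ofNat, hχ.apply_eleven hcop.coprime_mul_right,
      one_mul] at hχp
    rw [hχp, hχ2]
    simp [Int.even_add]
  · have hpv := not_dvd_of_principalForm_eq_prime hp
    obtain ⟨N, χ, hχ, hcop, hχ3, hχp, hχ2⟩ := exists_isCubicResidueChar_resolventCube hp hodd hv
      (hprime.coprime_iff_not_dvd.2 hpv).symm
    exact ⟨u, v, χ p, hp ▸ dvd_refl _, hpv, hcube hχ3 hcop, hχp ▸ hχ2,
      hχ.isCubicSymbol p hp3 hcop⟩

end ResolventCube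

/-- `T` is the Tribonacci sequence from index `1` on; `T 0` is arbitrary. -/
structure IsTribonacci (T : ℕ → ℤ) : Prop where
  one : T 1 = 1
  two : T 2 = 1
  three : T 3 = 2
  add_three (n : ℕ) (hn : 4 ≤ n) : T n = T (n - 1) + T (n - 2) + T (n - 3)

/-- `a`, `b`, `c` are the roots, with multiplicity, of the characteristic polynomial
`X ^ 3 - X ^ 2 - X - 1` of the Tribonacci recurrence, expressed through Vieta's formulas. -/
structure IsTribonacciRoots {R : Type*} [CommRing R] (a b c : R) : Prop where
  add_eq : a + b + c = 1
  mul_add_eq : a * b + b * c + c * a = -1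
  mul_eq : a * b * c = 1

namespace IsTribonacciRoots

section CommRing

variable {R : Type*} [CommRing R] {a b c : R}

theorem rotate (h : IsTribonacciRoots a b c) : IsTribonacciRoots b c a where
  add_eq := by linear_combination h.add_eq
  mul_add_eq := by linear_combination h.mul_add_eq
  mul_eq := by linear_combination h.mul_eq

theorem map {S : Type*} [CommRing S] (f : R →+* S) (h : IsTribonacciRoots a b c) :
    IsTribonacciRoots (f a) (f b) (f c) where
  add_eq := by rw [← map_add, ← map_add, h.add_eq, map_one]
  mul_add_eq := by simp only [← map_mul, ← map_add, h.mul_add_eq, map_neg, map_one]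
  mul_eq := by rw [← map_mul, ← map_mul, h.mul_eq, map_one]

theorem pow_add_three (h : IsTribonacciRoots a b c) (n : ℕ) :
    a ^ (n + 3) = a ^ (n + 2) + a ^ (n + 1) + a ^ n := by
  linear_combination a ^ n * (a ^ 2 * h.add_eq - a * h.mul_add_eq + h.mul_eq)

theorem discr_eq (h : IsTribonacciRoots a b c) : ((a - b) * (b - c) * (c - a)) ^ 2 = -44 := by
  calc ((a - b) * (b - c) * (c - a)) ^ 2
    _ = (a + b + c) ^ 2 * (a * b + b * c + c * a) ^ 2 - 4 * (a * b + b * c + c * a) ^ 3 -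
        4 * (a + b + c) ^ 3 * (a * b * c) +
        18 * (a + b + c) * (a * b + b * c + c * a) * (a * b * c) - 27 * (a * b * c) ^ 2 := by ring
    _ = -44 := by rw [h.add_eq, h.mul_add_eq, h.mul_eq]; norm_num

end CommRing

section Field

variable {k : Type*} [Field k] {a b c A B C : k}

theorem vandermonde_ne_zero (h2 : (2 : k) ≠ 0) (h11 : (11 : k) ≠ 0)
    (h : IsTribonacciRoots a b c) : (a - b) * (b - c) * (c - a) ≠ 0 := fun h0 ↦ by
  have hdiscr := h.discr_eq
  rw [h0] at hdiscr
  exact mul_ne_zero (pow_ne_zero 2 h2) h11 (by linear_combination hdiscr)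

theorem exists_of_isAlgClosed [IsAlgClosed k] : ∃ a b c : k, IsTribonacciRoots a b c := by
  let P : Cubic k := ⟨1, -1, -1, -1⟩
  obtain ⟨a, b, c, habc⟩ := (P.splits_iff_roots_eq_three (φ := RingHom.id k) one_ne_zero).1
    (IsAlgClosed.splits _)
  have hb := P.b_eq_three_roots one_ne_zero habc
  have hc := P.c_eq_three_roots one_ne_zero habc
  have hd := P.d_eq_three_roots one_ne_zero habc
  simp only [P, RingHom.id_apply, one_mul] at hb hc hd
  exact ⟨a, b, c, by linear_combination hb, by linear_combination -hc, by linear_combination hd⟩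

/- The relation makes the differences of `A, B, C` proportional to those of `a, b, c`; both triples
of differences have the same sum of squares, so the factor is `1` or `-1`, and `-1` is excluded by
comparing the products of the roots. -/
theorem eq_of_mul_sub_add_eq_zero (h2 : (2 : k) ≠ 0) (h3 : (3 : k) ≠ 0) (h11 : (11 : k) ≠ 0)
    (h19 : (19 : k) ≠ 0) (h : IsTribonacciRoots a b c) (h' : IsTribonacciRoots A B C)
    (hrel : A * (b - c) + B * (c - a) + C * (a - b) = 0) : A = a ∧ B = b ∧ C = c := by
  have hab : a - b ≠ 0 :=
    left_ne_zero_of_mul (left_ne_zero_of_mul (h.vandermonde_ne_zero h2 h11))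
  obtain ⟨l, hl⟩ : ∃ l, A - B = l * (a - b) := ⟨(A - B) / (a - b), by field_simp⟩
  have hl' : B - C = l * (b - c) := by
    refine mul_right_cancel₀ hab ?_
    linear_combination (b - c) * hl - hrel
  have hdiff {x y z : k} (h : IsTribonacciRoots x y z) :
      (x - y) ^ 2 + (y - z) ^ 2 + (x - z) ^ 2 = 8 := by
    linear_combination (2 * (x + y + z) + 2) * h.add_eq - 6 * h.mul_add_eq
  have hsq : l ^ 2 = 1 := by
    have hl'' : A - C = l * (a - c) := by linear_combination hl + hl'
    have := hdiff h'
    rw [hl, hl', hl''] at this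
    refine mul_right_cancel₀ (pow_ne_zero 3 h2) ?_
    linear_combination this - l ^ 2 * hdiff h
  obtain rfl | rfl := sq_eq_one_iff.1 hsq
  · have hA : A = a := mul_left_cancel₀ h3 (by
      linear_combination h'.add_eq - h.add_eq + 2 * hl + hl')
    exact ⟨hA, by linear_combination hA - hl, by linear_combination hA - hl - hl'⟩
  · refine absurd ?_ (mul_ne_zero (pow_ne_zero 2 h2) h19)
    have hA : 3 * A = 2 - 3 * a := by linear_combination h'.add_eq + h.add_eq + 2 * hl + hl'
    have hB : 3 * B = 2 - 3 * b := by linear_combination hA - 3 * hl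
    have hC : 3 * C = 2 - 3 * c := by linear_combination hB - 3 * hl'
    calc 2 ^ 2 * (19 : k) = 27 * (A * B * C) + 49 := by rw [h'.mul_eq]; norm_num
      _ = (3 * A) * (3 * B) * (3 * C) + 49 := by ring
      _ = 0 := by
        rw [hA, hB, hC]
        linear_combination -12 * h.add_eq + 18 * h.mul_add_eq - 27 * h.mul_eq

end Field

end IsTribonacciRoots

namespace IsTribonacci

variable {T : ℕ → ℤ}

theorem binet (hT : IsTribonacci T) {R : Type*} [CommRing R] {a b c : R}
    (h : IsTribonacciRoots a b c) (n : ℕ) :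
    (a - b) * (b - c) * (c - a) * (T (n + 1) : R) =
      -(a ^ (n + 2) * (b - c) + b ^ (n + 2) * (c - a) + c ^ (n + 2) * (a - b)) := by
  induction n using Nat.strong_induction_on with
  | _ n ih =>
    match n with
    | 0 => rw [hT.one]; push_cast; ring
    | 1 =>
      rw [hT.two]
      push_cast
      linear_combination -((a - b) * (b - c) * (c - a)) * h.add_eq
    | 2 =>
      rw [hT.three]
      push_cast
      linear_combination -((a - b) * (b - c) * (c - a)) *
        ((a + b + c + 1) * h.add_eq - h.mul_add_eq)
    | n + 3 =>
      have hrec : T (n + 3 + 1) = T (n + 2 + 1) + T (n + 1 + 1) + T (n + 1) :=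
        hT.add_three _ (by omega)
      rw [hrec]
      push_cast
      linear_combination ih n (by omega) + ih (n + 1) (by omega) + ih (n + 2) (by omega) +
        (b - c) * h.pow_add_three (n + 2) + (c - a) * h.rotate.pow_add_three (n + 2) +
        (a - b) * h.rotate.rotate.pow_add_three (n + 2)

section Frobenius

variable {k : Type*} [Field k] {a b c : k} {p : ℕ} [Fact p.Prime] [CharP k p]

theorem dvd_iff_pow_eq_self (hT : IsTribonacci T) (h2 : (2 : k) ≠ 0) (h3 : (3 : k) ≠ 0)
    (h11 : (11 : k) ≠ 0) (h19 : (19 : k) ≠ 0) (h : IsTribonacciRoots a b c) :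
    (p : ℤ) ∣ T (p - 1) ↔ a ^ p = a ∧ b ^ p = b ∧ c ^ p = c := by
  have hp : 2 ≤ p := (Fact.out : p.Prime).two_le
  have hbinet := hT.binet h (p - 2)
  rw [show p - 2 + 1 = p - 1 by omega, show p - 2 + 2 = p by omega] at hbinet
  rw [← CharP.intCast_eq_zero_iff k p, ← mul_right_inj' (h.vandermonde_ne_zero h2 h11), mul_zero,
    hbinet, neg_eq_zero]
  constructor
  · exact h.eq_of_mul_sub_add_eq_zero h2 h3 h11 h19 (h.map (frobenius k p))
  · rintro ⟨ha, hb, hc⟩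
    rw [ha, hb, hc]
    ring

theorem isSquare_neg_eleven (hT : IsTribonacci T) (hp2 : p ≠ 2) (hp3 : p ≠ 3) (hp11 : p ≠ 11)
    (hp19 : p ≠ 19) (hdvd : (p : ℤ) ∣ T (p - 1)) : IsSquare (-11 : ZMod p) := by
  let k := AlgebraicClosure (ZMod p)
  have hne {q : ℕ} (hq : q.Prime) (hpq : p ≠ q) : (q : k) ≠ 0 :=
    CharP.cast_ne_zero_of_ne_of_prime k hq hpq
  have h2 : (2 : k) ≠ 0 := mod_cast hne Nat.prime_two hp2
  obtain ⟨a, b, c, h⟩ := IsTribonacciRoots.exists_of_isAlgClosed (k := k)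
  obtain ⟨ha, hb, hc⟩ := (hT.dvd_iff_pow_eq_self h2 (mod_cast hne Nat.prime_three hp3)
    (mod_cast hne (by norm_num) hp11) (mod_cast hne (by norm_num) hp19) h).1 hdvd
  have hfixed : ((a - b) * (b - c) * (c - a)) ^ p = (a - b) * (b - c) * (c - a) := by
    simp only [mul_pow, sub_pow_char, ha, hb, hc]
  obtain ⟨n, hn⟩ := (mem_bot_iff_intCast p k).1 ((Subfield.mem_bot_iff_pow_eq_self k p).2 hfixed)
  have hn' : (n : k) ^ 2 = -44 := by rw [hn, h.discr_eq]
  have hn'' : (n : ZMod p) ^ 2 = -44 := by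
    refine (algebraMap (ZMod p) k).injective ?_
    rw [map_pow, map_intCast, map_neg, map_ofNat, hn']
  have h2' : (2 : ZMod p) ≠ 0 :=
    mod_cast CharP.cast_ne_zero_of_ne_of_prime (ZMod p) Nat.prime_two hp2
  refine ⟨n / 2, ?_⟩
  field_simp
  linear_combination -hn''

end Frobenius

end IsTribonacci

/-- The root of `X ^ 3 - X ^ 2 - X - 1` given by Cardano's formula from Lagrange resolvents `c`
and `d` with `c * d = 4` and `c ^ 3 + d ^ 3 = 38`, for the choice `w` of a cube root of unity. -/
def cardanoRoot {k : Type*} [Field k] (c d w : k) : k := (1 + c * w + d * w ^ 2) / 3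

section Cardano

variable {k : Type*} [Field k] {c d w : k}

theorem isTribonacciRoots_cardanoRoot (h3 : (3 : k) ≠ 0) (hcd : c * d = 4)
    (hsum : c ^ 3 + d ^ 3 = 38) (hw : w ^ 2 + w + 1 = 0) :
    IsTribonacciRoots (cardanoRoot c d 1) (cardanoRoot c d w) (cardanoRoot c d (w ^ 2)) := by
  have hw2 : w ^ 2 = -1 - w := by linear_combination hw
  have hw4 : (w ^ 2) ^ 2 = w := by linear_combination (w ^ 2 - w) * hw
  have h0 : cardanoRoot c d 1 = (1 + c + d) / 3 := by rw [cardanoRoot, one_pow, mul_one, mul_one]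
  have h1 : cardanoRoot c d w = (1 + c * w + d * (-1 - w)) / 3 := by rw [cardanoRoot, hw2]
  have h2 : cardanoRoot c d (w ^ 2) = (1 + c * (-1 - w) + d * w) / 3 := by
    rw [cardanoRoot, hw4, hw2]
  constructor <;> rw [h0, h1, h2] <;> field_simp
  · ring
  · linear_combination -3 * hcd - (c - d) ^ 2 * hw
  · linear_combination hsum - 3 * hcd - (1 + c + d) * (c - d) ^ 2 * hw

theorem cardanoRoot_pow_char {p : ℕ} [Fact p.Prime] [CharP k p] {ξ : k} (hξ : ξ ^ 3 = 1)
    (h : p % 3 = 1 ∧ c ^ p = ξ ^ 2 * c ∧ d ^ p = ξ * d ∨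
      p % 3 = 2 ∧ c ^ p = ξ * d ∧ d ^ p = ξ ^ 2 * c) (hw : w ^ 3 = 1) :
    cardanoRoot c d w ^ p = cardanoRoot c d (ξ ^ 2 * w) := by
  have h3 : (3 : k) ^ p = 3 := by rw [← frobenius_def, map_ofNat]
  simp only [cardanoRoot, div_pow, add_pow_char, mul_pow, one_pow, h3, ← pow_mul, mul_comm 2 p]
  simp only [pow_mul, pow_eq_pow_mod p hw]
  obtain ⟨hp, hc, hd⟩ | ⟨hp, hc, hd⟩ := h <;> rw [hp, hc, hd] <;> congr 1
  · linear_combination -d * ξ * w ^ 2 * hξ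
  · linear_combination -d * ξ * w ^ 2 * hξ + ξ ^ 2 * c * w * hw

end Cardano

section Resolvent

open EisensteinInt

variable {k : Type*} [Field k]

theorem lagrangeResolvent_mul_eq_and_cube_add_eq (h2 : (2 : k) ≠ 0) {z z' v ρ : k} (hv : v ≠ 0)
    (hρ0 : ρ ≠ 0) (hρ : z = ρ ^ 3 * z') (hmul : z * z' = 16 * v ^ 2) (hadd : z + z' = 19 * v) :
    z / (2 * v * ρ) * (z' * ρ / (2 * v)) = 4 ∧
      (z / (2 * v * ρ)) ^ 3 + (z' * ρ / (2 * v)) ^ 3 = 38 := by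
  constructor
  · field_simp
    linear_combination hmul
  · have hc : (z / (2 * v * ρ)) ^ 3 = 2 * z / v := by
      field_simp
      linear_combination z ^ 2 * hρ + ρ ^ 3 * z * hmul
    have hd : (z' * ρ / (2 * v)) ^ 3 = 2 * z' / v := by
      field_simp
      linear_combination -z' ^ 2 * hρ + z' * hmul
    rw [hc, hd]
    field_simp
    linear_combination 2 * hadd

variable {p : ℕ} [Fact p.Prime] [CharP k p] {φ : EisensteinInt →+* k} {ξ : EisensteinInt}

theorem lagrangeResolvent_pow_char (hp3 : p ≠ 3) {α : EisensteinInt} {a ρ : k} (ha0 : a ≠ 0)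
    (ha : a ^ p = a) (hξ : φ ξ ^ 3 = 1) (hρ0 : ρ ≠ 0) (hρ1 : p % 3 = 1 → ρ ^ p = φ ξ * ρ)
    (hρ2 : p % 3 = 2 → φ ξ * ρ ^ p * ρ = 1) :
    p % 3 = 1 ∧ (φ α / (a * ρ)) ^ p = φ ξ ^ 2 * (φ α / (a * ρ)) ∧
        (φ (star α) * ρ / a) ^ p = φ ξ * (φ (star α) * ρ / a) ∨
      p % 3 = 2 ∧ (φ α / (a * ρ)) ^ p = φ ξ * (φ (star α) * ρ / a) ∧
        (φ (star α) * ρ / a) ^ p = φ ξ ^ 2 * (φ α / (a * ρ)) := by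
  obtain hp | hp : p % 3 = 1 ∨ p % 3 = 2 := by
    have : ¬ 3 ∣ p := fun h ↦
      hp3 ((Nat.prime_dvd_prime_iff_eq Nat.prime_three Fact.out).1 h).symm
    omega
  · refine .inl ⟨hp, ?_, ?_⟩
    · rw [div_pow, mul_pow, ha, map_pow_char_of_mod_three_eq_one φ hp, hρ1 hp]
      have hξ0 : φ ξ ≠ 0 := fun h0 ↦ by simp [h0] at hξ
      field_simp
      rw [hξ, mul_one]
    · rw [div_pow, mul_pow, ha, map_pow_char_of_mod_three_eq_one φ hp, hρ1 hp]
      ring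
  · refine .inr ⟨hp, ?_, ?_⟩
    · rw [div_pow, mul_pow, ha, map_pow_char_of_mod_three_eq_two φ hp]
      field_simp
      linear_combination -φ (star α) * hρ2 hp
    · rw [div_pow, mul_pow, ha, map_pow_char_of_mod_three_eq_two φ hp, star_star]
      field_simp
      linear_combination φ α * φ ξ ^ 2 * hρ2 hp - φ α * ρ * ρ ^ p * hξ

theorem exists_lagrangeResolvent (h2 : (2 : k) ≠ 0) (hp3 : p ≠ 3) {u v : ℤ}
    (hv : ¬ (p : ℤ) ∣ v) (hform : (p : ℤ) ∣ principalForm u v) (hξ : ξ ^ 3 = 1)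
    (h : IsCubicSymbol p φ (resolventCube u v) ξ) :
    ∃ c d : k, c * d = 4 ∧ c ^ 3 + d ^ 3 = 38 ∧
      ∀ w, w ^ 3 = 1 → cardanoRoot c d w ^ p = cardanoRoot c d (φ ξ ^ 2 * w) := by
  obtain ⟨ρ, hρ0, hρ, hρ1, hρ2⟩ := h
  have hv0 : (v : k) ≠ 0 := fun h0 ↦ hv ((CharP.intCast_eq_zero_iff k p v).1 h0)
  have hmul : φ (resolventCube u v) * φ (star (resolventCube u v)) = 16 * v ^ 2 := by
    rw [← map_mul, mul_star_eq_norm, map_intCast, norm_resolventCube]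
    push_cast
    rw [(CharP.intCast_eq_zero_iff k p _).2 hform, mul_zero, add_zero]
  have hadd : φ (resolventCube u v) + φ (star (resolventCube u v)) = 19 * v := by
    rw [← map_add, resolventCube_add_star, map_mul, map_ofNat, map_intCast]
  have h2v : (2 * v : k) ^ p = 2 * v := by
    rw [← frobenius_def, map_mul, map_ofNat, map_intCast]
  have hξ' : φ ξ ^ 3 = 1 := by rw [← map_pow, hξ, map_one]
  obtain ⟨hcd, hsum⟩ := lagrangeResolvent_mul_eq_and_cube_add_eq h2 hv0 hρ0 hρ hmul hadd
  exact ⟨_, _, hcd, hsum, fun w hw ↦ cardanoRoot_pow_char hξ'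
    (lagrangeResolvent_pow_char hp3 (mul_ne_zero h2 hv0) h2v hξ' hρ0 hρ1 hρ2) hw⟩

end Resolvent

open EisensteinInt in
theorem IsTribonacci.dvd_iff_even {T : ℕ → ℤ} (hT : IsTribonacci T) {p : ℕ} [Fact p.Prime]
    (hp2 : p ≠ 2) (hp3 : p ≠ 3) (hp11 : p ≠ 11) (hp19 : p ≠ 19) {u v : ℤ}
    (hp : principalForm u v = p) : (p : ℤ) ∣ T (p - 1) ↔ Even v := by
  let k := AlgebraicClosure (ZMod p)
  have hne {q : ℕ} (hq : q.Prime) (hpq : p ≠ q) : (q : k) ≠ 0 :=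
    CharP.cast_ne_zero_of_ne_of_prime k hq hpq
  have h2 : (2 : k) ≠ 0 := mod_cast hne Nat.prime_two hp2
  have h3 : (3 : k) ≠ 0 := mod_cast hne Nat.prime_three hp3
  have h11 : (11 : k) ≠ 0 := mod_cast hne (by norm_num) hp11
  have h19 : (19 : k) ≠ 0 := mod_cast hne (by norm_num) hp19
  obtain ⟨φ⟩ := nonempty_ringHom (k := k)
  obtain ⟨u', v', ξ, hform, hv', hξ, hiff, hsymb⟩ :=
    exists_isCubicSymbol_resolventCube hp2 hp3 hp11 hp
  obtain ⟨c, d, hcd, hsum, hroot⟩ := exists_lagrangeResolvent h2 hp3 hv' hform hξ (hsymb φ)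
  have hφξ : φ ξ = 1 ↔ Even v := by
    rw [← hiff]
    exact ⟨eq_one_of_map_eq_one φ h3 hξ, fun h ↦ by rw [h, map_one]⟩
  have hroots {w : k} (hw : w ^ 2 + w + 1 = 0) := isTribonacciRoots_cardanoRoot h3 hcd hsum hw
  rw [← hφξ]
  constructor
  · intro hdvd
    by_contra hξ1
    have hξ' : φ ξ ^ 3 = 1 := by rw [← map_pow, hξ, map_one]
    have hw : (φ ξ ^ 2) ^ 2 + φ ξ ^ 2 + 1 = 0 := by
      refine mul_left_cancel₀ (sub_ne_zero.2 hξ1) ?_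
      linear_combination (φ ξ ^ 2 - φ ξ + 1) * hξ'
    have hfix := ((hT.dvd_iff_pow_eq_self h2 h3 h11 h19 (hroots hw)).1 hdvd).1
    rw [hroot 1 (one_pow 3), mul_one] at hfix
    refine (hroots hw).vandermonde_ne_zero h2 h11 ?_
    rw [hfix, sub_self, zero_mul, zero_mul]
  · intro hξ1
    rw [hT.dvd_iff_pow_eq_self h2 h3 h11 h19 (hroots (map_omega_sq φ))]
    have hfix {w : k} (hw : w ^ 3 = 1) : cardanoRoot c d w ^ p = cardanoRoot c d w := by
      rw [hroot w hw, hξ1, one_pow, one_mul]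
    have hω := map_omega_cube φ
    exact ⟨hfix (one_pow 3), hfix hω, hfix (by rw [← pow_mul, mul_comm, pow_mul, hω, one_pow])⟩

section PrincipalForm

variable {p : ℕ} [Fact p.Prime]

theorem thue_exists_intCast_eq_mul (r : ZMod p) :
    ∃ x y : ℤ, (x, y) ≠ 0 ∧ (x : ZMod p) = r * y ∧ x ^ 2 < p ∧ y ^ 2 < p := by
  let n := p.sqrt
  let f : Fin (n + 1) × Fin (n + 1) → ZMod p := fun a ↦ (a.1 : ℕ) - r * (a.2 : ℕ)
  have hcard : Fintype.card (ZMod p) < Fintype.card (Fin (n + 1) × Fin (n + 1)) := by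
    simpa only [ZMod.card, Fintype.card_prod, Fintype.card_fin] using Nat.lt_succ_sqrt p
  obtain ⟨a, b, hab, hf⟩ := Fintype.exists_ne_map_eq_of_card_lt f hcard
  have hlt (i j : Fin (n + 1)) : ((i : ℤ) - (j : ℤ)) ^ 2 < p := by
    have hn : n * n < p := (Nat.sqrt_le p).lt_of_ne fun h ↦
      (Fact.out : p.Prime).prime.not_isSquare ⟨n, h.symm⟩
    calc ((i : ℤ) - (j : ℤ)) ^ 2 ≤ (n : ℤ) ^ 2 := sq_le_sq.2 (by grind)
      _ < p := by exact_mod_cast (pow_two n).trans_lt hn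
  refine ⟨(a.1 : ℤ) - (b.1 : ℤ), (a.2 : ℤ) - (b.2 : ℤ), fun h ↦ hab ?_, ?_, hlt _ _, hlt _ _⟩
  · rw [Prod.mk_eq_zero, sub_eq_zero, sub_eq_zero, Nat.cast_inj, Nat.cast_inj] at h
    exact Prod.ext (Fin.ext h.1) (Fin.ext h.2)
  · push_cast
    linear_combination hf

theorem principalForm_pos {u v : ℤ} (h : (u, v) ≠ 0) : 0 < principalForm u v := by
  have h4 := four_mul_principalForm u v
  by_contra hle
  have hv : v = 0 := by nlinarith
  have hu : u = 0 := by subst hv; nlinarith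
  exact h (by rw [hu, hv]; rfl)

theorem even_and_even_of_even_principalForm {u v : ℤ} (h : Even (principalForm u v)) :
    Even u ∧ Even v := by
  simp only [principalForm, Int.even_add, Int.even_mul, Int.even_pow] at h
  grind

theorem exists_principalForm_eq_mul_of_isSquare (hp2 : p ≠ 2) (h : IsSquare (-11 : ZMod p)) :
    ∃ u v m : ℤ, principalForm u v = m * p ∧ 0 < m ∧ m < 5 := by
  obtain ⟨s, hs⟩ := h
  have h2 : (2 : ZMod p) ≠ 0 := mod_cast CharP.cast_ne_zero_of_ne_of_prime _ Nat.prime_two hp2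
  obtain ⟨u, v, huv0, huv, hu, hv⟩ := thue_exists_intCast_eq_mul ((s - 1) / 2)
  have hdvd : (p : ℤ) ∣ principalForm u v := by
    rw [← ZMod.intCast_zmod_eq_zero_iff_dvd, principalForm]
    push_cast
    rw [huv]
    field_simp
    linear_combination -(v : ZMod p) ^ 2 * hs
  obtain ⟨m, hm⟩ := hdvd
  have hp0 : (0 : ℤ) < p := mod_cast (Fact.out : p.Prime).pos
  have hpos := principalForm_pos huv0
  have hlt : principalForm u v < 5 * p := by
    rw [principalForm]
    linarith [sq_nonneg (u - v)]
  rw [hm] at hpos hlt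
  exact ⟨u, v, m, by rw [hm, mul_comm], pos_of_mul_pos_right hpos hp0.le, by nlinarith⟩

theorem exists_principalForm_eq_of_three_mul {u v n : ℤ} (h : principalForm u v = 3 * n) :
    ∃ u' v', principalForm u' v' = n := by
  simp only [principalForm] at h ⊢
  have hprod : 3 ∣ u * (u + v) := ⟨n - v ^ 2, by linear_combination h⟩
  obtain ⟨a, ha⟩ | ⟨a, ha⟩ := Int.prime_three.dvd_or_dvd hprod
  · exact ⟨v, a, by subst ha; linarith⟩
  · obtain rfl : u = 3 * a - v := by linarith
    exact ⟨v, -a, by linarith⟩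

theorem exists_principalForm_eq_of_isSquare (hp2 : p ≠ 2) (h : IsSquare (-11 : ZMod p)) :
    ∃ u v, principalForm u v = p := by
  have hodd : Odd p := (Fact.out : p.Prime).odd_of_ne_two hp2
  obtain ⟨u, v, m, huv, hm0, hm5⟩ := exists_principalForm_eq_mul_of_isSquare hp2 h
  obtain rfl | rfl | rfl | rfl : m = 1 ∨ m = 2 ∨ m = 3 ∨ m = 4 := by omega
  · exact ⟨u, v, by rw [huv, one_mul]⟩
  · obtain ⟨⟨a, rfl⟩, b, rfl⟩ :=
      even_and_even_of_even_principalForm (huv ▸ (even_two_mul (p : ℤ)))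
    have hp : (p : ℤ) = 2 * principalForm a b := by
      simp only [principalForm] at huv ⊢
      linarith
    exact absurd (hp ▸ even_two_mul _) (Int.not_even_iff_odd.2 ((Int.odd_coe_nat p).2 hodd))
  · exact exists_principalForm_eq_of_three_mul huv
  · obtain ⟨⟨a, rfl⟩, b, rfl⟩ := even_and_even_of_even_principalForm
      (huv ▸ (by decide : Even (4 : ℤ)).mul_right (p : ℤ))
    exact ⟨a, b, by simp only [principalForm] at huv ⊢; linarith⟩

theorem exists_eq_sq_add_eleven_mul_sq_iff {n : ℤ} :
    (∃ X Y, n = X ^ 2 + 11 * Y ^ 2) ↔ ∃ u v, Even v ∧ principalForm u v = n := by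
  constructor
  · rintro ⟨X, Y, rfl⟩
    exact ⟨X - Y, 2 * Y, even_two_mul Y, by rw [principalForm]; ring⟩
  · rintro ⟨u, v, ⟨Y, rfl⟩, rfl⟩
    exact ⟨u + Y, Y, by rw [principalForm]; ring⟩

theorem eleven_le_of_eq_sq_add_eleven_mul_sq {X Y : ℤ} (h : (p : ℤ) = X ^ 2 + 11 * Y ^ 2) :
    11 ≤ p := by
  have hY : Y ≠ 0 := by
    rintro rfl
    refine (Nat.prime_iff_prime_int.1 Fact.out : Prime (p : ℤ)).not_isSquare ⟨X, ?_⟩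
    rw [h]; ring
  have : 0 < Y ^ 2 := by positivity
  nlinarith [sq_nonneg X]

end PrincipalForm

theorem tribonacci_divisibility (T : ℕ → ℤ)
    (h1 : T 1 = 1) (h2 : T 2 = 1) (h3 : T 3 = 2)
    (hrec : ∀ n, 4 ≤ n → T n = T (n - 1) + T (n - 2) + T (n - 3))
    (p : ℕ) (hp : p.Prime) (hpe : ¬ (p ∣ 11 * 19)) :
    (p : ℤ) ∣ T (p - 1) ↔ ∃ X Y : ℤ, (p : ℤ) = X ^ 2 + 11 * Y ^ 2 := by
  have : Fact p.Prime := ⟨hp⟩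
  have hT : IsTribonacci T := ⟨h1, h2, h3, hrec⟩
  have hp11 : p ≠ 11 := by rintro rfl; exact hpe (dvd_mul_right 11 19)
  have hp19 : p ≠ 19 := by rintro rfl; exact hpe (dvd_mul_left 19 11)
  constructor
  · intro hdvd
    have hp2 : p ≠ 2 := by rintro rfl; rw [h1] at hdvd; norm_num at hdvd
    have hp3 : p ≠ 3 := by rintro rfl; rw [h2] at hdvd; norm_num at hdvd
    obtain ⟨u, v, huv⟩ := exists_principalForm_eq_of_isSquare hp2
      (hT.isSquare_neg_eleven hp2 hp3 hp11 hp19 hdvd)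
    exact exists_eq_sq_add_eleven_mul_sq_iff.2
      ⟨u, v, (hT.dvd_iff_even hp2 hp3 hp11 hp19 huv).1 hdvd, huv⟩
  · rintro ⟨X, Y, hXY⟩
    have hp_ge := eleven_le_of_eq_sq_add_eleven_mul_sq hXY
    obtain ⟨u, v, hv, huv⟩ := exists_eq_sq_add_eleven_mul_sq_iff.1 ⟨X, Y, hXY⟩
    exact (hT.dvd_iff_even (by omega) (by omega) hp11 hp19 huv).2 hv
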